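/- arXiv:1605.03046 — 2 statements merged into one kernel-verified Lean document; each statement's English description precedes it below -/
import Mathlib

section
/- Fix positive reals p₋₁, p₀, p₁ with p₁ ≠ p₋₁, let P(1) = p₋₁ + p₀ + p₁, and let w_{n,k} denote the total weight of Motzkin walks of length n with exactly k sign changes. Define X_n by P[X_n = k] = w_{n,k}/P(1)ⁿ. Then X_n converges in distribution to a geometric law: for every fixed k ∈ ℕ, lim_{n→∞} w_{n,k}/P(1)ⁿ = λ^k · (1 − λ), where λ = p₁/p₋₁ if p₁ < p₋₁ (negative drift) and λ = p₋₁/p₁ if p₁ > p₋₁ (positive drift). -/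
open scoped BigOperators Classical

/-- Value of a step encoded by `Fin 3`: `0 ↦ -1`, `1 ↦ 0`, `2 ↦ +1`. -/
def stepVal (s : Fin 3) : ℤ := (s : ℤ) - 1

/-- Weight of a single step: `p₋₁` for `-1`, `p₀` for `0`, `p₁` for `+1`. -/
def stepWeight (pm p0 p1 : ℝ) (s : Fin 3) : ℝ :=
  if s = 0 then pm else if s = 1 then p0 else p1

/-- Weight of a Motzkin walk (product of its step weights). -/
def walkWeight (pm p0 p1 : ℝ) {n : ℕ} (w : Fin n → Fin 3) : ℝ :=
  ∏ i, stepWeight pm p0 p1 (w i)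

/-- Partial sum `ω_j` of the walk `w`. -/
def psum {n : ℕ} (w : Fin n → Fin 3) (j : ℕ) : ℤ :=
  ∑ i ∈ Finset.univ.filter (fun i : Fin n => (i : ℕ) < j), stepVal (w i)

/-- Total weight of Motzkin bridges of length `n`. -/
noncomputable def bridgeW (pm p0 p1 : ℝ) (n : ℕ) : ℝ :=
  ∑ w ∈ Finset.univ.filter (fun w : Fin n → Fin 3 => psum w n = 0),
    walkWeight pm p0 p1 w

/-- Number of returns to zero of a walk of length `n`. -/
def retZero {n : ℕ} (w : Fin n → Fin 3) : ℕ :=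
  ((Finset.Icc 1 n).filter (fun j => psum w j = 0)).card

/-- Total weight of walks of length `n` with exactly `k` returns to zero. -/
noncomputable def walkRetW (pm p0 p1 : ℝ) (n k : ℕ) : ℝ :=
  ∑ w ∈ Finset.univ.filter (fun w : Fin n → Fin 3 => retZero w = k),
    walkWeight pm p0 p1 w

/-- Number of sign changes of a walk of length `n`. -/
def signChanges {n : ℕ} (w : Fin n → Fin 3) : ℕ :=
  (((Finset.range (n+1)) ×ˢ (Finset.range (n+1))).filter
    (fun p => p.1 < p.2 ∧ psum w p.1 * psum w p.2 < 0 ∧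
      ∀ l ∈ Finset.Ioo p.1 p.2, psum w l = 0)).card

/-- Total weight of bridges of length `n` with exactly `k` sign changes. -/
noncomputable def bridgeSignW (pm p0 p1 : ℝ) (n k : ℕ) : ℝ :=
  ∑ w ∈ Finset.univ.filter
      (fun w : Fin n → Fin 3 => psum w n = 0 ∧ signChanges w = k),
    walkWeight pm p0 p1 w

/-- Total weight of positive excursions of length `n`. -/
noncomputable def posExcW (pm p0 p1 : ℝ) (n : ℕ) : ℝ :=
  ∑ w ∈ Finset.univ.filter
      (fun w : Fin n → Fin 3 => psum w n = 0 ∧ ∀ j ∈ Finset.range (n+1), 0 ≤ psum w j),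
    walkWeight pm p0 p1 w

/-- Total weight of negative excursions of length `n`. -/
noncomputable def negExcW (pm p0 p1 : ℝ) (n : ℕ) : ℝ :=
  ∑ w ∈ Finset.univ.filter
      (fun w : Fin n → Fin 3 => psum w n = 0 ∧ ∀ j ∈ Finset.range (n+1), psum w j ≤ 0),
    walkWeight pm p0 p1 w

/-- A positive bridge: a bridge whose last nonzero partial sum is positive. -/
def IsPosBridge {n : ℕ} (w : Fin n → Fin 3) : Prop :=
  psum w n = 0 ∧ ∃ j ∈ Finset.range (n+1),
    0 < psum w j ∧ ∀ l ∈ Finset.Ioc j n, psum w l = 0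

/-- A negative bridge: a bridge whose last nonzero partial sum is negative. -/
def IsNegBridge {n : ℕ} (w : Fin n → Fin 3) : Prop :=
  psum w n = 0 ∧ ∃ j ∈ Finset.range (n+1),
    psum w j < 0 ∧ ∀ l ∈ Finset.Ioc j n, psum w l = 0

instance {n : ℕ} (w : Fin n → Fin 3) : Decidable (IsPosBridge w) := by
  unfold IsPosBridge; infer_instance

instance {n : ℕ} (w : Fin n → Fin 3) : Decidable (IsNegBridge w) := by
  unfold IsNegBridge; infer_instance

/-- Total weight of positive bridges of length `n` with `k` sign changes. -/
noncomputable def posBridgeSignW (pm p0 p1 : ℝ) (n k : ℕ) : ℝ :=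
  ∑ w ∈ Finset.univ.filter
      (fun w : Fin n → Fin 3 => IsPosBridge w ∧ signChanges w = k),
    walkWeight pm p0 p1 w

/-- Total weight of negative bridges of length `n` with `k` sign changes. -/
noncomputable def negBridgeSignW (pm p0 p1 : ℝ) (n k : ℕ) : ℝ :=
  ∑ w ∈ Finset.univ.filter
      (fun w : Fin n → Fin 3 => IsNegBridge w ∧ signChanges w = k),
    walkWeight pm p0 p1 w

/-- Total weight of walks of length `n` with `k` sign changes. -/
noncomputable def walkSignW (pm p0 p1 : ℝ) (n k : ℕ) : ℝ :=
  ∑ w ∈ Finset.univ.filter (fun w : Fin n → Fin 3 => signChanges w = k),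
    walkWeight pm p0 p1 w

/-- Height of a walk of length `n` (as a natural number; it is `max_j ω_j ≥ 0`). -/
def height {n : ℕ} (w : Fin n → Fin 3) : ℕ :=
  (Finset.range (n+1)).sup (fun j => (psum w j).toNat)

/-- Total weight of walks of length `n` of height exactly `h`. -/
noncomputable def heightW (pm p0 p1 : ℝ) (n h : ℕ) : ℝ :=
  ∑ w ∈ Finset.univ.filter (fun w : Fin n → Fin 3 => height w = h),
    walkWeight pm p0 p1 w

/-!
Suppose the drift is negative and put `λ = p₁ / p₋₁`. To the right of the origin a walk is certain
to come down, while climbing one level has probability `λ`. Hence a walk sees `k` further sign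
changes with probability `λ ^ c`, where `c` is the number of levels it has to climb for them. This
gives a function that is harmonic along the walk, so that its weighted sum over the walks of
length `n` is `P(1) ^ n` times its initial value `λ ^ k`. At time `n` it differs from the indicator
of `k` sign changes having occurred by at most `u ^ ω_n`, for every `u` between `1` and `1 / λ`, and
the weighted sum of this error is `P(u) ^ n`, which is negligible because `P(u) < P(1)`. Positive
drift reduces to negative drift by reflection.
-/

open Filter Topology

namespace MotzkinWalk

section Sequence

/-- The last nonzero term among `ω 0, …, ω n`, or `0` if there is none. Its sign decides whether
the next term completes a sign change. -/
def lastNonzero (ω : ℕ → ℤ) : ℕ → ℤ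
  | 0 => ω 0
  | n + 1 => if ω (n + 1) = 0 then lastNonzero ω n else ω (n + 1)

/-- The number of sign changes of an integer sequence among its terms `ω 0, …, ω n`; it agrees
definitionally with `signChanges` on partial sums. -/
def seqSignChanges (ω : ℕ → ℤ) (n : ℕ) : ℕ :=
  ((Finset.range (n + 1) ×ˢ Finset.range (n + 1)).filter fun p =>
    p.1 < p.2 ∧ ω p.1 * ω p.2 < 0 ∧ ∀ l ∈ Finset.Ioo p.1 p.2, ω l = 0).card

variable {ω ω' : ℕ → ℤ} {n : ℕ}

theorem lastNonzero_of_ne_zero (h : ω n ≠ 0) : lastNonzero ω n = ω n := by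
  cases n with
  | zero => rfl
  | succ n => exact if_neg h

theorem lastNonzero_congr (h : ∀ j ≤ n, ω j = ω' j) : lastNonzero ω n = lastNonzero ω' n := by
  induction n with
  | zero => exact h 0 le_rfl
  | succ n ih => rw [lastNonzero, lastNonzero, h _ le_rfl, ih fun j hj => h j (hj.trans n.le_succ)]

theorem seqSignChanges_congr (h : ∀ j ≤ n, ω j = ω' j) :
    seqSignChanges ω n = seqSignChanges ω' n := by
  unfold seqSignChanges
  congr 1
  ext p
  grind

theorem seqSignChanges_zero : seqSignChanges ω 0 = 0 := by
  simp [seqSignChanges, Finset.filter_singleton]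

theorem card_signChange_starts (ω : ℕ → ℤ) (n : ℕ) (y : ℤ) :
    ((Finset.range (n + 1)).filter fun i =>
      ω i * y < 0 ∧ ∀ l ∈ Finset.Ioo i (n + 1), ω l = 0).card
      = if lastNonzero ω n * y < 0 then 1 else 0 := by
  induction n with
  | zero =>
    simp only [zero_add, Finset.range_one, Finset.filter_singleton, lastNonzero]
    grind
  | succ n ih =>
    rw [Finset.range_add_one, Finset.filter_insert, lastNonzero]
    by_cases h : ω (n + 1) = 0
    · rw [if_neg (by simp [h]), if_pos h, ← ih]
      congr 1
      ext i
      grind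
    · have hempty : ((Finset.range (n + 1)).filter fun i =>
          ω i * y < 0 ∧ ∀ l ∈ Finset.Ioo i (n + 1 + 1), ω l = 0) = ∅ := by
        ext i
        grind
      rw [hempty, if_neg h]
      simp [apply_ite]

theorem seqSignChanges_succ (ω : ℕ → ℤ) (n : ℕ) :
    seqSignChanges ω (n + 1)
      = seqSignChanges ω n + if lastNonzero ω n * ω (n + 1) < 0 then 1 else 0 := by
  rw [← card_signChange_starts]
  simp only [seqSignChanges, Finset.card_filter, Finset.sum_product_right]
  rw [Finset.sum_range_succ]
  congr 1
  · refine Finset.sum_congr rfl fun j hj => ?_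
    rw [Finset.sum_range_succ]
    grind
  · rw [Finset.sum_range_succ, if_neg fun h => lt_irrefl _ h.1, add_zero]
    refine Finset.sum_congr rfl fun i hi => ?_
    grind

end Sequence

section Walk

variable {n : ℕ}

theorem psum_snoc_of_le (w : Fin n → Fin 3) (d : Fin 3) {j : ℕ} (hj : j ≤ n) :
    psum (Fin.snoc w d : Fin (n + 1) → Fin 3) j = psum w j := by
  simp only [psum, Finset.sum_filter, Fin.sum_univ_castSucc]
  simp [hj]

theorem psum_snoc_last (w : Fin n → Fin 3) (d : Fin 3) :
    psum (Fin.snoc w d : Fin (n + 1) → Fin 3) (n + 1) = psum w n + stepVal d := by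
  simp only [psum, Finset.sum_filter, Fin.sum_univ_castSucc]
  simp

theorem sum_stepWeight_mul (pm p0 p1 : ℝ) (f : ℤ → ℝ) :
    ∑ d, stepWeight pm p0 p1 d * f (stepVal d) = pm * f (-1) + p0 * f 0 + p1 * f 1 := by
  simp [Fin.sum_univ_three, stepWeight, stepVal]

theorem walkWeight_snoc (pm p0 p1 : ℝ) (w : Fin n → Fin 3) (d : Fin 3) :
    walkWeight pm p0 p1 (Fin.snoc w d : Fin (n + 1) → Fin 3)
      = walkWeight pm p0 p1 w * stepWeight pm p0 p1 d := by
  simp [walkWeight, Fin.prod_univ_castSucc]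

theorem lastNonzero_psum_snoc (w : Fin n → Fin 3) (d : Fin 3) :
    lastNonzero (psum (Fin.snoc w d : Fin (n + 1) → Fin 3)) (n + 1)
      = if psum w n + stepVal d = 0 then lastNonzero (psum w) n else psum w n + stepVal d := by
  rw [lastNonzero, psum_snoc_last, lastNonzero_congr fun j => psum_snoc_of_le w d]

theorem signChanges_snoc (w : Fin n → Fin 3) (d : Fin 3) :
    signChanges (Fin.snoc w d : Fin (n + 1) → Fin 3) = signChanges w
      + if lastNonzero (psum w) n * (psum w n + stepVal d) < 0 then 1 else 0 := by
  have h := seqSignChanges_succ (psum (Fin.snoc w d : Fin (n + 1) → Fin 3)) n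
  rwa [psum_snoc_last, lastNonzero_congr fun j => psum_snoc_of_le w d,
    seqSignChanges_congr fun j => psum_snoc_of_le w d] at h

theorem sum_walkWeight_mul_of_step {pm p0 p1 c : ℝ} (F : ∀ {n : ℕ}, (Fin n → Fin 3) → ℝ)
    (hF : ∀ {n : ℕ} (w : Fin n → Fin 3),
      ∑ d, stepWeight pm p0 p1 d * F (Fin.snoc w d : Fin (n + 1) → Fin 3) = c * F w) (n : ℕ) :
    ∑ w : Fin n → Fin 3, walkWeight pm p0 p1 w * F w = c ^ n * F ![] := by
  induction n with
  | zero => simp [walkWeight, Matrix.empty_eq]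
  | succ n ih =>
    rw [← (Fin.snocEquiv fun _ => Fin 3).sum_comp, Fintype.sum_prod_type_right, pow_succ',
      mul_assoc, ← ih, Finset.mul_sum]
    refine Finset.sum_congr rfl fun w _ => ?_
    calc ∑ d, walkWeight pm p0 p1 (Fin.snoc w d : Fin (n + 1) → Fin 3) * F (Fin.snoc w d)
        = walkWeight pm p0 p1 w * ∑ d, stepWeight pm p0 p1 d * F (Fin.snoc w d) := by
          simp only [walkWeight_snoc, mul_assoc, Finset.mul_sum]
      _ = c * (walkWeight pm p0 p1 w * F w) := by rw [hF, mul_left_comm]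

end Walk

section HarmonicFunction

/-- The number of levels that a walk with negative drift has to climb to see `k` more sign changes,
when it stands at `x` and its last nonzero position is `v`. On the positive side every second sign
change requires a climb from `-1` to `1`; on the negative side the first one requires a climb
from `x` to `1`. At `v = 0` the side is still undecided, and the value `k` is the one whose power
is the average of the powers for the two sides. Only `x = v` and `x = 0` occur. -/
def climb : ℕ → ℤ → ℤ → ℕ
  | 0, _, _ => 0
  | k + 1, v, x =>
      if v = 0 then k + 1 else if 0 < v then 2 * ((k + 1) / 2) else 2 * (k / 2) + 1 + x.natAbs

variable {pm p0 p1 lam : ℝ} {v x y : ℤ}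

@[simp]
theorem climb_zero (v x : ℤ) : climb 0 v x = 0 := rfl

theorem climb_undecided (k : ℕ) (x : ℤ) : climb k 0 x = k := by
  cases k <;> simp [climb]

theorem climb_of_pos (k : ℕ) (hv : 0 < v) (x : ℤ) : climb k v x = 2 * (k / 2) := by
  cases k <;> simp [climb, hv, hv.ne']

theorem climb_of_neg (k : ℕ) (hv : v < 0) (x : ℤ) :
    climb (k + 1) v x = 2 * (k / 2) + 1 + x.natAbs := by
  simp [climb, hv.ne, hv.not_gt]

theorem climb_of_neg_neg_one (k : ℕ) (hv : v < 0) : climb k v (-1) = 2 * ((k + 1) / 2) := by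
  cases k with
  | zero => rfl
  | succ k => rw [climb_of_neg k hv]; simp only [Int.natAbs_neg, Int.natAbs_one]; omega

/-- The value of `climb` after a move to `y`, in terms of the previous last nonzero position `v`
and of the number `k` of sign changes that were outstanding before the move. -/
def climbAfter (k : ℕ) (v y : ℤ) : ℕ :=
  climb (k - if v * y < 0 then 1 else 0) (if y = 0 then v else y) y

theorem climbAfter_zero (v y : ℤ) : climbAfter 0 v y = 0 := by
  rw [climbAfter, Nat.zero_sub, climb_zero]

theorem climbAfter_of_pos (k : ℕ) (hv : 0 < v) (hy : -1 ≤ y) :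
    climbAfter k v y = 2 * (k / 2) := by
  rcases hy.eq_or_lt with rfl | hy
  · rw [climbAfter, if_pos (by omega), if_neg (by omega), climb_of_neg_neg_one _ (by omega)]
    omega
  · have hvy : ¬v * y < 0 := (mul_nonneg hv.le (by omega)).not_gt
    rw [climbAfter, if_neg hvy, Nat.sub_zero, climb_of_pos]
    split_ifs <;> omega

theorem climbAfter_of_neg (k : ℕ) (hv : v < 0) (hy : y ≤ 0) :
    climbAfter (k + 1) v y = 2 * (k / 2) + 1 + y.natAbs := by
  have hvy : ¬v * y < 0 := (mul_nonneg_of_nonpos_of_nonpos hv.le hy).not_gt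
  rw [climbAfter, if_neg hvy, Nat.sub_zero, climb_of_neg]
  split_ifs <;> omega

theorem climbAfter_of_neg_one (k : ℕ) (hv : v < 0) : climbAfter (k + 1) v 1 = 2 * (k / 2) := by
  simp [climbAfter, hv, climb_of_pos]

theorem pow_climb_harmonic_of_pos (k : ℕ) (hv : 0 < v) (hx : 0 ≤ x) :
    ∑ d, stepWeight pm p0 p1 d * lam ^ climbAfter k v (x + stepVal d)
      = (pm + p0 + p1) * lam ^ climb k v x := by
  rw [sum_stepWeight_mul _ _ _ fun d => lam ^ climbAfter k v (x + d),
    climbAfter_of_pos k hv (by omega), climbAfter_of_pos k hv (by omega),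
    climbAfter_of_pos k hv (by omega), climb_of_pos k hv]
  ring

theorem pow_climb_harmonic_of_neg (hlam : pm * lam = p1) (k : ℕ) (hv : v < 0) (hx : x ≤ 0) :
    ∑ d, stepWeight pm p0 p1 d * lam ^ climbAfter (k + 1) v (x + stepVal d)
      = (pm + p0 + p1) * lam ^ climb (k + 1) v x := by
  set e := 2 * (k / 2) + x.natAbs
  have hdown : climbAfter (k + 1) v (x + -1) = e + 2 := by
    rw [climbAfter_of_neg k hv (by omega)]; omega
  have hstay : climbAfter (k + 1) v (x + 0) = e + 1 := by
    rw [climbAfter_of_neg k hv (by omega)]; omega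
  have hup : climbAfter (k + 1) v (x + 1) = e := by
    rcases hx.eq_or_lt with rfl | hx
    · rw [zero_add, climbAfter_of_neg_one k hv]; omega
    · rw [climbAfter_of_neg k hv (by omega)]; omega
  have hclimb : climb (k + 1) v x = e + 1 := by
    rw [climb_of_neg k hv]; omega
  rw [sum_stepWeight_mul _ _ _ fun d => lam ^ climbAfter (k + 1) v (x + d), hdown, hstay, hup,
    hclimb, ← hlam]
  ring

theorem pow_climb_harmonic_undecided (hlam : pm * lam = p1) (k : ℕ) :
    ∑ d, stepWeight pm p0 p1 d * lam ^ climbAfter k 0 (0 + stepVal d)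
      = (pm + p0 + p1) * lam ^ climb k 0 0 := by
  have hdown : climbAfter k 0 (0 + -1) = 2 * ((k + 1) / 2) := by
    simp [climbAfter, climb_of_neg_neg_one]
  have hstay : climbAfter k 0 (0 + 0) = k := by simp [climbAfter, climb_undecided]
  have hup : climbAfter k 0 (0 + 1) = 2 * (k / 2) := by simp [climbAfter, climb_of_pos]
  rw [sum_stepWeight_mul _ _ _ fun d => lam ^ climbAfter k 0 (0 + d), hdown, hstay, hup,
    climb_undecided, ← hlam]
  obtain ⟨m, rfl | rfl⟩ := k.even_or_odd'
  · rw [show (2 * m + 1) / 2 = m by omega, show 2 * m / 2 = m by omega]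
    ring
  · rw [show (2 * m + 1 + 1) / 2 = m + 1 by omega, show (2 * m + 1) / 2 = m by omega]
    ring

theorem pow_climb_harmonic (hlam : pm * lam = p1) (k : ℕ) (hv : x ≠ 0 → v = x) :
    ∑ d, stepWeight pm p0 p1 d * lam ^ climbAfter k v (x + stepVal d)
      = (pm + p0 + p1) * lam ^ climb k v x := by
  rcases lt_trichotomy v 0 with h | rfl | h
  · cases k with
    | zero => simp [climbAfter_zero, Fin.sum_univ_three, stepWeight]
    | succ k => exact pow_climb_harmonic_of_neg hlam k h (by omega)
  · obtain rfl : x = 0 := by omega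
    exact pow_climb_harmonic_undecided hlam k
  · exact pow_climb_harmonic_of_pos k h (by omega)

theorem abs_ite_sub_pow_climb_le {u : ℝ} (hlam : 0 ≤ lam) (hu : 1 ≤ u) (hlu : lam * u ≤ 1)
    (k : ℕ) (hv : x ≠ 0 → v = x) :
    |(if k = 0 then 1 else 0) - lam ^ climb k v x| ≤ u ^ x := by
  have hu0 : 0 < u := by positivity
  have hlam1 : lam ≤ 1 := (le_mul_of_one_le_right hlam hu).trans hlu
  cases k with
  | zero => simpa using (zpow_pos hu0 x).le
  | succ k =>
    rw [if_neg k.succ_ne_zero, zero_sub, abs_neg, abs_of_nonneg (pow_nonneg hlam _)]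
    rcases le_or_gt 0 x with hx | hx
    · exact (pow_le_one₀ hlam hlam1).trans (one_le_zpow₀ hu hx)
    · have hlinv : lam ≤ u⁻¹ := by rwa [← one_div, le_div_iff₀ hu0]
      calc lam ^ climb (k + 1) v x ≤ lam ^ x.natAbs :=
            pow_le_pow_of_le_one hlam hlam1 (by rw [climb_of_neg k (by omega)]; omega)
        _ ≤ u⁻¹ ^ x.natAbs := by gcongr
        _ = u ^ x := by rw [← zpow_natCast, Int.ofNat_natAbs_of_nonpos hx.le, inv_zpow', neg_neg]

end HarmonicFunction

section Weights

variable {pm p0 p1 lam u : ℝ} {n : ℕ}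

theorem walkWeight_nonneg (hpm : 0 ≤ pm) (hp0 : 0 ≤ p0) (hp1 : 0 ≤ p1) (w : Fin n → Fin 3) :
    0 ≤ walkWeight pm p0 p1 w :=
  Finset.prod_nonneg fun i _ => by unfold stepWeight; split_ifs <;> assumption

theorem sum_walkWeight_mul_pow_climb (hlam : pm * lam = p1) (n k : ℕ) :
    ∑ w : Fin n → Fin 3, walkWeight pm p0 p1 w *
      lam ^ climb (k - signChanges w) (lastNonzero (psum w) n) (psum w n)
      = (pm + p0 + p1) ^ n * lam ^ k := by
  rw [sum_walkWeight_mul_of_step (c := pm + p0 + p1) fun {n} w =>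
    lam ^ climb (k - signChanges w) (lastNonzero (psum w) n) (psum w n)]
  · have h : signChanges (![] : Fin 0 → Fin 3) = 0 := seqSignChanges_zero
    simp [h, lastNonzero, psum, climb_undecided]
  · intro n w
    simp only [signChanges_snoc, lastNonzero_psum_snoc, psum_snoc_last, ← Nat.sub_sub]
    exact pow_climb_harmonic hlam _ fun h => lastNonzero_of_ne_zero h

/-- The step polynomial `P(u)` of the walks, a Laurent polynomial in `u`. -/
noncomputable def stepPoly (pm p0 p1 u : ℝ) : ℝ := pm / u + p0 + p1 * u

theorem sum_walkWeight_mul_zpow_psum (hu : u ≠ 0) (n : ℕ) :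
    ∑ w : Fin n → Fin 3, walkWeight pm p0 p1 w * u ^ psum w n = stepPoly pm p0 p1 u ^ n := by
  rw [sum_walkWeight_mul_of_step (c := stepPoly pm p0 p1 u) fun {n} w => u ^ psum w n]
  · simp [psum]
  · intro n w
    simp only [psum_snoc_last]
    rw [sum_stepWeight_mul _ _ _ fun d => u ^ (psum w n + d)]
    simp only [zpow_add₀ hu, stepPoly, zpow_neg_one, zpow_zero, zpow_one]
    ring

theorem stepPoly_lt (hu : 1 < u) (h : p1 * u < pm) : stepPoly pm p0 p1 u < pm + p0 + p1 := by
  have hu0 : 0 < u := by positivity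
  have hfactor : pm + p0 + p1 - stepPoly pm p0 p1 u = (u - 1) * (pm - p1 * u) / u := by
    unfold stepPoly
    field_simp
    ring
  rw [← sub_pos, hfactor]
  exact div_pos (mul_pos (sub_pos.mpr hu) (sub_pos.mpr h)) hu0

theorem exists_stepPoly_lt (hp1 : 0 ≤ p1) (hdrift : p1 < pm) :
    ∃ u, 1 < u ∧ p1 * u < pm ∧ stepPoly pm p0 p1 u < pm + p0 + p1 := by
  have hsum : 0 < p1 + pm := by linarith
  have hu : 1 < 2 * pm / (p1 + pm) := by rw [one_lt_div hsum]; linarith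
  have hpu : p1 * (2 * pm / (p1 + pm)) < pm := by
    rw [mul_div_assoc', div_lt_iff₀ hsum]; nlinarith
  exact ⟨_, hu, hpu, stepPoly_lt hu hpu⟩

/-- Total weight of walks of length `n` with at least `k` sign changes. -/
noncomputable def walkSignTailW (pm p0 p1 : ℝ) (n k : ℕ) : ℝ :=
  ∑ w : Fin n → Fin 3 with k ≤ signChanges w, walkWeight pm p0 p1 w

theorem walkSignW_eq_tail_sub (pm p0 p1 : ℝ) (n k : ℕ) :
    walkSignW pm p0 p1 n k
      = walkSignTailW pm p0 p1 n k - walkSignTailW pm p0 p1 n (k + 1) := by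
  simp only [walkSignW, walkSignTailW, Finset.sum_filter, ← Finset.sum_sub_distrib]
  refine Finset.sum_congr rfl fun w _ => ?_
  grind

theorem abs_walkSignTailW_sub_le (hpm : 0 ≤ pm) (hp0 : 0 ≤ p0) (hp1 : 0 ≤ p1) (hlam : 0 ≤ lam)
    (hpl : pm * lam = p1) (hu : 1 ≤ u) (hlu : lam * u ≤ 1) (n k : ℕ) :
    |walkSignTailW pm p0 p1 n k - (pm + p0 + p1) ^ n * lam ^ k| ≤ stepPoly pm p0 p1 u ^ n := by
  rw [← sum_walkWeight_mul_pow_climb hpl, ← sum_walkWeight_mul_zpow_psum (by positivity),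
    walkSignTailW, Finset.sum_filter, ← Finset.sum_sub_distrib]
  refine (Finset.abs_sum_le_sum_abs _ _).trans (Finset.sum_le_sum fun w _ => ?_)
  have hw := walkWeight_nonneg hpm hp0 hp1 w
  calc |(if k ≤ signChanges w then walkWeight pm p0 p1 w else 0) - walkWeight pm p0 p1 w *
          lam ^ climb (k - signChanges w) (lastNonzero (psum w) n) (psum w n)|
      = walkWeight pm p0 p1 w * |(if k - signChanges w = 0 then 1 else 0) -
          lam ^ climb (k - signChanges w) (lastNonzero (psum w) n) (psum w n)| := by
        rw [← abs_of_nonneg hw, ← abs_mul, mul_sub, mul_ite, mul_one, mul_zero, abs_of_nonneg hw]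
        simp only [Nat.sub_eq_zero_iff_le]
    _ ≤ walkWeight pm p0 p1 w * u ^ psum w n := by
        gcongr
        exact abs_ite_sub_pow_climb_le hlam hu hlu _ lastNonzero_of_ne_zero

end Weights

section Limit

variable {pm p0 p1 : ℝ}

theorem tendsto_walkSignTailW_of_neg_drift (hp0 : 0 ≤ p0) (hp1 : 0 ≤ p1) (hdrift : p1 < pm)
    (k : ℕ) :
    Tendsto (fun n => walkSignTailW pm p0 p1 n k / (pm + p0 + p1) ^ n) atTop
      (𝓝 ((p1 / pm) ^ k)) := by
  have hpm : 0 < pm := hp1.trans_lt hdrift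
  have hP : 0 < pm + p0 + p1 := by positivity
  obtain ⟨u, hu, hpu, hPu⟩ := exists_stepPoly_lt (p0 := p0) hp1 hdrift
  have hlu : p1 / pm * u ≤ 1 := by rw [div_mul_eq_mul_div, div_le_one hpm]; exact hpu.le
  have hratio : Tendsto (fun n => (stepPoly pm p0 p1 u / (pm + p0 + p1)) ^ n) atTop (𝓝 0) :=
    tendsto_pow_atTop_nhds_zero_of_lt_one (by unfold stepPoly; positivity) ((div_lt_one hP).mpr hPu)
  rw [tendsto_iff_dist_tendsto_zero]
  refine squeeze_zero (fun _ => dist_nonneg) (fun n => ?_) hratio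
  have hPn : 0 < (pm + p0 + p1) ^ n := pow_pos hP n
  calc |walkSignTailW pm p0 p1 n k / (pm + p0 + p1) ^ n - (p1 / pm) ^ k|
      = |walkSignTailW pm p0 p1 n k - (pm + p0 + p1) ^ n * (p1 / pm) ^ k|
          / (pm + p0 + p1) ^ n := by
        rw [div_sub' hPn.ne', abs_div, abs_of_pos hPn]
    _ ≤ stepPoly pm p0 p1 u ^ n / (pm + p0 + p1) ^ n := by
        gcongr
        exact abs_walkSignTailW_sub_le hpm.le hp0 hp1 (by positivity)
          (mul_div_cancel₀ _ hpm.ne') hu.le hlu n k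
    _ = (stepPoly pm p0 p1 u / (pm + p0 + p1)) ^ n := (div_pow _ _ n).symm

theorem tendsto_walkSignW_of_neg_drift (hp0 : 0 ≤ p0) (hp1 : 0 ≤ p1) (hdrift : p1 < pm)
    (k : ℕ) :
    Tendsto (fun n => walkSignW pm p0 p1 n k / (pm + p0 + p1) ^ n) atTop
      (𝓝 ((p1 / pm) ^ k * (1 - p1 / pm))) := by
  have htail := tendsto_walkSignTailW_of_neg_drift hp0 hp1 hdrift
  rw [mul_one_sub, ← pow_succ]
  simpa only [walkSignW_eq_tail_sub, sub_div] using (htail k).sub (htail (k + 1))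

end Limit

section Reflection

variable {n : ℕ}

theorem psum_rev (w : Fin n → Fin 3) : psum (Fin.rev ∘ w) = -psum w := by
  have hstep : ∀ d, stepVal (Fin.rev d) = -stepVal d := by decide
  ext j
  simp [psum, hstep]

theorem signChanges_rev (w : Fin n → Fin 3) : signChanges (Fin.rev ∘ w) = signChanges w := by
  simp [signChanges, psum_rev]

theorem walkWeight_rev (pm p0 p1 : ℝ) (w : Fin n → Fin 3) :
    walkWeight pm p0 p1 (Fin.rev ∘ w) = walkWeight p1 p0 pm w := by
  have hstep (d : Fin 3) : stepWeight pm p0 p1 d.rev = stepWeight p1 p0 pm d := by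
    fin_cases d <;> simp [stepWeight]
  simp [walkWeight, hstep]

theorem walkSignW_swap (pm p0 p1 : ℝ) (n k : ℕ) :
    walkSignW p1 p0 pm n k = walkSignW pm p0 p1 n k := by
  refine Finset.sum_equiv (Equiv.piCongrRight fun _ => Fin.revPerm) (fun w => ?_) fun w _ =>
    (walkWeight_rev pm p0 p1 w).symm
  simp only [Finset.mem_filter_univ]
  change _ ↔ signChanges (Fin.rev ∘ w) = k
  rw [signChanges_rev]

end Reflection

end MotzkinWalk

theorem walks_sign_changes_geometric_general (pm p0 p1 : ℝ)
    (hpm : 0 ≤ pm) (hp0 : 0 ≤ p0) (hp1 : 0 ≤ p1) (hdrift : p1 ≠ pm) :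
    let P1 : ℝ := pm + p0 + p1
    let lam : ℝ := if p1 < pm then p1 / pm else pm / p1
    ∀ k : ℕ,
      Filter.Tendsto (fun n : ℕ => walkSignW pm p0 p1 n k / P1 ^ n)
        Filter.atTop (nhds (lam ^ k * (1 - lam))) := by
  intro P1 lam k
  rcases hdrift.lt_or_gt with h | h
  · simpa only [lam, if_pos h] using MotzkinWalk.tendsto_walkSignW_of_neg_drift hp0 hp1 h k
  · have hP1 : P1 = p1 + p0 + pm := by ring
    simp only [lam, if_neg h.not_gt, hP1, MotzkinWalk.walkSignW_swap p1 p0 pm]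
    exact MotzkinWalk.tendsto_walkSignW_of_neg_drift hp0 hpm h k

/-- **Limit law for sign changes of walks, nonzero drift**: geometric limit law with
parameter `λ = p₁/p₋₁` (negative drift) resp. `λ = p₋₁/p₁` (positive drift). -/
theorem walks_sign_changes_geometric (pm p0 p1 : ℝ)
    (hpm : 0 < pm) (hp0 : 0 < p0) (hp1 : 0 < p1) (hdrift : p1 ≠ pm) :
    let P1 : ℝ := pm + p0 + p1
    let lam : ℝ := if p1 < pm then p1 / pm else pm / p1
    ∀ k : ℕ,
      Filter.Tendsto (fun n : ℕ => walkSignW pm p0 p1 n k / P1 ^ n)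
        Filter.atTop (nhds (lam ^ k * (1 - lam))) := by
  exact walks_sign_changes_geometric_general pm p0 p1 hpm.le hp0.le hp1.le hdrift
end

section
/- Fix positive reals p₋₁, p₀, p₁ with p₁ = p₋₁ (zero drift), let P(1) = p₋₁ + p₀ + p₁ and P″(1) = 2p₋₁, and let w_{n,k} denote the total weight of Motzkin walks of length n with exactly k sign changes. Then, with σ = (1/2)·√(P″(1)/P(1)), the number of sign changes rescaled by √n converges in distribution to the half-normal law H(σ): for every real x ≥ 0, lim_{n→∞} (Σ_{k ≤ x√n} w_{n,k})/P(1)ⁿ = ∫_0^x √(2/(πσ²)) · exp(−t²/(2σ²)) dt. -/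
open scoped BigOperators Classical

/-!
For equal weights `p₁ = p₋₁`, reflect each step of a walk `S` that is taken while the last nonzero
partial sum is positive, or before there is one. This Lévy transform `S ↦ S'` is a weight-preserving
bijection, and the discrete Tanaka formula reads `S'_j = 2 c_j - |S_j|`, where `c_j` is the number
of sign changes up to time `j`, plus one if `S` first leaves `0` downwards. Since `|S_j| = 1` just
after a sign change, the height of `S'` is `2 c_n` or `2 c_n - 1`, so the number of sign changes is
distributed as half the height of a walk, up to a bounded error. By the reflection principle, the
probability that the height is at least `h` is `P(S_n ≥ h) + P(S_n ≥ h + 1)`, and the central limit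
theorem turns this into a half-normal law, whose parameter is halved along with the height.
-/

open Finset Filter MeasureTheory ProbabilityTheory Topology

section SignChanges

variable {ω : ℕ → ℤ}

/-- The number of sign changes among `ω 0, …, ω n`, as counted by `signChanges` along a walk. -/
def seqSignChanges (ω : ℕ → ℤ) (n : ℕ) : ℕ :=
  #{p ∈ range (n + 1) ×ˢ range (n + 1) |
    p.1 < p.2 ∧ ω p.1 * ω p.2 < 0 ∧ ∀ l ∈ Ioo p.1 p.2, ω l = 0}

/-- The sign of the last nonzero term among `ω 1, …, ω n`, or the default `d` if they all vanish. -/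
def lastSign (d : ℤ) (ω : ℕ → ℤ) : ℕ → ℤ
  | 0 => d
  | n + 1 => if ω (n + 1) = 0 then lastSign d ω n else (ω (n + 1)).sign

/-- The number of sign changes among `d, ω 1, …, ω n`: the initial sign `d` is prescribed, so that
`d = 0` gives the sign changes of `ω`, and `d = 1` also counts a first departure from `0` to the
negative side. -/
def signChangesFrom (d : ℤ) (ω : ℕ → ℤ) (n : ℕ) : ℕ :=
  #{j ∈ range n | lastSign d ω j * ω (j + 1) < 0}

lemma signChangesFrom_succ (d : ℤ) (ω : ℕ → ℤ) (n : ℕ) :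
    signChangesFrom d ω (n + 1) =
      signChangesFrom d ω n + if lastSign d ω n * ω (n + 1) < 0 then 1 else 0 := by
  simp only [signChangesFrom, card_filter, sum_range_succ]

lemma signChangesFrom_mono (d : ℤ) (ω : ℕ → ℤ) : Monotone (signChangesFrom d ω) :=
  fun _ _ h => card_le_card (filter_subset_filter _ (range_mono h))

lemma lastSign_mul_self (d : ℤ) (h0 : ω 0 = 0) (n : ℕ) : lastSign d ω n * ω n = |ω n| := by
  cases n with
  | zero => simp [h0]
  | succ n => by_cases h : ω (n + 1) = 0 <;> simp [lastSign, h]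

lemma lastSign_one_eq_one_or (ω : ℕ → ℤ) (n : ℕ) : lastSign 1 ω n = 1 ∨ lastSign 1 ω n = -1 := by
  induction n with
  | zero => exact .inl rfl
  | succ n ih =>
    rcases lt_trichotomy (ω (n + 1)) 0 with h | h | h
    · simp [lastSign, h.ne, Int.sign_eq_neg_one_of_neg h]
    · simpa [lastSign, h] using ih
    · simp [lastSign, h.ne', Int.sign_eq_one_of_pos h]

lemma lastSign_congr (d : ℤ) {η : ℕ → ℤ} {n : ℕ} (h : ∀ j ≤ n, ω j = η j) :
    lastSign d ω n = lastSign d η n := by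
  induction n with
  | zero => rfl
  | succ n ih => simp only [lastSign, h (n + 1) le_rfl, ih fun j hj => h j (by lia)]

lemma sign_mul_neg_iff (a z : ℤ) : a.sign * z < 0 ↔ a * z < 0 := by
  rw [← Int.sign_eq_neg_one_iff_neg, ← Int.sign_eq_neg_one_iff_neg, Int.sign_mul, Int.sign_mul,
    Int.sign_sign]

lemma forall_mem_Ioo_succ_iff {p : ℕ → Prop} {i n : ℕ} (hi : i < n + 1) :
    (∀ l ∈ Ioo i (n + 2), p l) ↔ (∀ l ∈ Ioo i (n + 1), p l) ∧ p (n + 1) := by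
  grind

lemma card_lastSign_opposite (h0 : ω 0 = 0) (n : ℕ) (z : ℤ) :
    #{i ∈ range (n + 1) | ω i * z < 0 ∧ ∀ l ∈ Ioo i (n + 1), ω l = 0} =
      if lastSign 0 ω n * z < 0 then 1 else 0 := by
  induction n with
  | zero => simp [lastSign, h0, filter_singleton]
  | succ n ih =>
    rw [range_add_one, filter_insert]
    by_cases h : ω (n + 1) = 0
    · simp only [h, lastSign, if_true, zero_mul, lt_irrefl, false_and, if_false, ← ih]
      congr 1
      refine filter_congr fun i hi => ?_
      rw [forall_mem_Ioo_succ_iff (mem_range.1 hi), and_iff_left h]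
    · have hempty : {i ∈ range (n + 1) | ω i * z < 0 ∧ ∀ l ∈ Ioo i (n + 2), ω l = 0} = ∅ :=
        filter_eq_empty_iff.2 fun i hi ⟨_, hzero⟩ =>
          h ((forall_mem_Ioo_succ_iff (mem_range.1 hi)).1 hzero).2
      have hIoo : ∀ l ∈ Ioo (n + 1) (n + 2), ω l = 0 := by grind
      simp only [hempty, lastSign, h, if_false, sign_mul_neg_iff, and_iff_left hIoo]
      split_ifs <;> simp

lemma seqSignChanges_eq_signChangesFrom_zero (h0 : ω 0 = 0) (n : ℕ) :
    seqSignChanges ω n = signChangesFrom 0 ω n := by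
  induction n with
  | zero => simp [seqSignChanges, signChangesFrom, filter_singleton]
  | succ n ih =>
    rw [signChangesFrom_succ, ← ih, ← card_lastSign_opposite h0]
    simp only [seqSignChanges, card_filter, sum_product_right]
    rw [sum_range_succ _ (n + 1)]
    congr 1
    · refine sum_congr rfl fun j hj => ?_
      rw [sum_range_succ _ (n + 1), if_neg (by grind), add_zero]
    · rw [sum_range_succ _ (n + 1), if_neg (by simp), add_zero]
      refine sum_congr rfl fun i hi => ?_
      simp only [mem_range.1 hi, true_and]

lemma lastSign_zero_eq_one_or_eq_zero (ω : ℕ → ℤ) (n : ℕ) :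
    (lastSign 0 ω n = lastSign 1 ω n ∧ signChangesFrom 0 ω n ≤ signChangesFrom 1 ω n ∧
        signChangesFrom 1 ω n ≤ signChangesFrom 0 ω n + 1) ∨
      (lastSign 0 ω n = 0 ∧ signChangesFrom 1 ω n = signChangesFrom 0 ω n) := by
  induction n with
  | zero => exact .inr ⟨rfl, rfl⟩
  | succ n ih =>
    simp only [signChangesFrom_succ, lastSign]
    rcases ih with ⟨hsign, hle, hle'⟩ | ⟨hsign, heq⟩ <;> grind

lemma signChangesFrom_zero_le_one (ω : ℕ → ℤ) (n : ℕ) :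
    signChangesFrom 0 ω n ≤ signChangesFrom 1 ω n := by
  rcases lastSign_zero_eq_one_or_eq_zero ω n with ⟨_, hle, _⟩ | ⟨_, heq⟩
  exacts [hle, heq.ge]

lemma signChangesFrom_one_le_zero_add_one (ω : ℕ → ℤ) (n : ℕ) :
    signChangesFrom 1 ω n ≤ signChangesFrom 0 ω n + 1 := by
  rcases lastSign_zero_eq_one_or_eq_zero ω n with ⟨_, _, hle⟩ | ⟨_, heq⟩
  exacts [hle, heq.le.trans (Nat.le_succ _)]

/-- The Lévy transform of `ω`: the sum of its increments, each taken with the sign opposite to that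
of the last nonzero term before it. The sign before the first nonzero term is taken to be `1`, so
that no increment is lost and the transform is invertible. -/
def levyTransform (ω : ℕ → ℤ) (n : ℕ) : ℤ :=
  -∑ j ∈ range n, lastSign 1 ω j * (ω (j + 1) - ω j)

lemma abs_succ_eq_one_of_sign_change (h0 : ω 0 = 0) (hstep : ∀ j, |ω (j + 1) - ω j| ≤ 1) {n : ℕ}
    (h : lastSign 1 ω n * ω (n + 1) < 0) : ω n = 0 ∧ |ω (n + 1)| = 1 := by
  have hmul := lastSign_mul_self 1 h0 n
  have hbound := abs_le.1 (hstep n)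
  rcases lastSign_one_eq_one_or ω n with hs | hs <;> grind

lemma levyTransform_eq (h0 : ω 0 = 0) (hstep : ∀ j, |ω (j + 1) - ω j| ≤ 1) (n : ℕ) :
    levyTransform ω n = 2 * signChangesFrom 1 ω n - |ω n| := by
  induction n with
  | zero => simp [levyTransform, signChangesFrom, h0]
  | succ n ih =>
    have hrec : levyTransform ω (n + 1) =
        levyTransform ω n - lastSign 1 ω n * (ω (n + 1) - ω n) := by
      simp only [levyTransform, sum_range_succ]
      ring
    rw [hrec, ih, mul_sub, lastSign_mul_self 1 h0, signChangesFrom_succ]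
    by_cases h : lastSign 1 ω n * ω (n + 1) < 0
    · have := abs_succ_eq_one_of_sign_change h0 hstep h
      rcases lastSign_one_eq_one_or ω n with hs | hs <;> grind
    · rcases lastSign_one_eq_one_or ω n with hs | hs <;> grind

lemma levyTransform_le (h0 : ω 0 = 0) (hstep : ∀ j, |ω (j + 1) - ω j| ≤ 1) {j n : ℕ} (hj : j ≤ n) :
    levyTransform ω j ≤ 2 * signChangesFrom 1 ω n := by
  have hmono := signChangesFrom_mono 1 ω hj
  have habs := abs_nonneg (ω j)
  rw [levyTransform_eq h0 hstep]
  lia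

lemma exists_le_levyTransform (h0 : ω 0 = 0) (hstep : ∀ j, |ω (j + 1) - ω j| ≤ 1) (n : ℕ) :
    ∃ j ≤ n, 2 * (signChangesFrom 1 ω n : ℤ) - 1 ≤ levyTransform ω j := by
  induction n with
  | zero => exact ⟨0, le_rfl, by simp [levyTransform, signChangesFrom]⟩
  | succ n ih =>
    by_cases h : lastSign 1 ω n * ω (n + 1) < 0
    · refine ⟨n + 1, le_rfl, ?_⟩
      rw [levyTransform_eq h0 hstep, (abs_succ_eq_one_of_sign_change h0 hstep h).2]
    · obtain ⟨j, hj, hle⟩ := ih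
      refine ⟨j, by lia, ?_⟩
      rwa [signChangesFrom_succ, if_neg h, add_zero]

end SignChanges

section Walks

variable {n : ℕ}

lemma stepVal_rev (s : Fin 3) : stepVal s.rev = -stepVal s := by
  decide +revert

lemma abs_stepVal_le_one (s : Fin 3) : |stepVal s| ≤ 1 := by
  decide +revert

lemma psum_zero (w : Fin n → Fin 3) : psum w 0 = 0 := by
  simp [psum]

lemma psum_succ (w : Fin n → Fin 3) (i : Fin n) : psum w (i + 1) = psum w i + stepVal (w i) := by
  have hinsert : univ.filter (fun j : Fin n => (j : ℕ) < i + 1) =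
      insert i (univ.filter fun j : Fin n => (j : ℕ) < i) := by grind
  rw [psum, hinsert, sum_insert (by simp), add_comm, psum]

lemma psum_of_le (w : Fin n → Fin 3) {j : ℕ} (hj : n ≤ j) : psum w j = ∑ i, stepVal (w i) := by
  rw [psum, filter_true_of_mem fun i _ => i.2.trans_le hj]

lemma psum_congr {w v : Fin n → Fin 3} {j : ℕ} (h : ∀ i : Fin n, (i : ℕ) < j → w i = v i) :
    psum w j = psum v j :=
  sum_congr rfl fun i hi => by rw [h i (mem_filter.1 hi).2]

lemma abs_psum_succ_sub_le_one (w : Fin n → Fin 3) (j : ℕ) : |psum w (j + 1) - psum w j| ≤ 1 := by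
  rcases lt_or_ge j n with hj | hj
  · simpa [psum_succ w ⟨j, hj⟩] using abs_stepVal_le_one _
  · simp [psum_of_le w hj, psum_of_le w (hj.trans j.le_succ)]

lemma psum_cons_succ (s : Fin 3) (w : Fin n → Fin 3) (j : ℕ) :
    psum (Fin.cons s w : Fin (n + 1) → Fin 3) (j + 1) = stepVal s + psum w j := by
  simp [psum, sum_filter, Fin.sum_univ_succ]

lemma le_height_iff (w : Fin n → Fin 3) {h : ℤ} : h ≤ height w ↔ ∃ j ≤ n, h ≤ psum w j := by
  rcases le_or_gt h 0 with hh | hh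
  · exact iff_of_true (hh.trans (by positivity)) ⟨0, n.zero_le, by rwa [psum_zero]⟩
  · lift h to ℕ using hh.le
    rw [Nat.cast_le, height, Finset.le_sup_iff (by simpa using hh)]
    simp only [mem_range, Order.lt_add_one_iff]
    refine exists_congr fun j => and_congr_right fun _ => ?_
    lia

lemma height_lt_iff (w : Fin n → Fin 3) {h : ℤ} : height w < h ↔ ∀ j ≤ n, psum w j < h := by
  simpa using (le_height_iff w (h := h)).not

lemma le_height_cons_iff (s : Fin 3) (w : Fin n → Fin 3) {h : ℤ} (hh : 0 < h) :
    h ≤ height (Fin.cons s w : Fin (n + 1) → Fin 3) ↔ h - stepVal s ≤ height w := by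
  rw [le_height_iff, le_height_iff]
  constructor
  · rintro ⟨_ | j, hj, hle⟩
    · exact absurd hh (by rwa [psum_zero, ← not_lt] at hle)
    · rw [psum_cons_succ] at hle
      exact ⟨j, by lia, by lia⟩
  · rintro ⟨j, hj, hle⟩
    exact ⟨j + 1, by lia, by rw [psum_cons_succ]; lia⟩

/-- The Lévy transform of a walk: each step taken while the last nonzero partial sum is
positive, or before there is one, is reflected. -/
def reflectSteps (w : Fin n → Fin 3) : Fin n → Fin 3 :=
  fun i => if lastSign 1 (psum w) i = 1 then (w i).rev else w i

lemma stepVal_reflectSteps (w : Fin n → Fin 3) (i : Fin n) :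
    stepVal (reflectSteps w i) = -(lastSign 1 (psum w) i * stepVal (w i)) := by
  rcases lastSign_one_eq_one_or (psum w) i with h | h <;> simp [reflectSteps, h, stepVal_rev]

lemma psum_reflectSteps (w : Fin n → Fin 3) {j : ℕ} (hj : j ≤ n) :
    psum (reflectSteps w) j = levyTransform (psum w) j := by
  induction j with
  | zero => simp [psum_zero, levyTransform]
  | succ j ih =>
    have hw := psum_succ w ⟨j, hj⟩
    have hr := psum_succ (reflectSteps w) ⟨j, hj⟩
    rw [stepVal_reflectSteps] at hr
    rw [hr, ih (by lia), levyTransform, levyTransform, sum_range_succ, hw]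
    ring

lemma reflectSteps_injective : Function.Injective (reflectSteps (n := n)) := by
  intro w v h
  suffices ∀ j, ∀ i : Fin n, (i : ℕ) < j → w i = v i from funext fun i => this n i i.2
  intro j
  induction j with
  | zero => simp
  | succ j ih =>
    intro i hi
    have hpast : ∀ l < j + 1, psum w l = psum v l := fun l hl =>
      psum_congr fun i hi => ih i (by lia)
    have hsign : lastSign 1 (psum w) i = lastSign 1 (psum v) i :=
      lastSign_congr 1 fun l hl => hpast l (by lia)
    have hi := congrFun h i
    simp only [reflectSteps, hsign] at hi
    split_ifs at hi
    exacts [Fin.rev_injective hi, hi]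

lemma signChanges_eq_signChangesFrom (w : Fin n → Fin 3) :
    signChanges w = signChangesFrom 0 (psum w) n :=
  seqSignChanges_eq_signChangesFrom_zero (psum_zero w) n

lemma height_reflectSteps_le (w : Fin n → Fin 3) :
    height (reflectSteps w) ≤ 2 * signChanges w + 2 := by
  have hcompare := signChangesFrom_one_le_zero_add_one (psum w) n
  have hheight : height (reflectSteps w) < 2 * (signChangesFrom 1 (psum w) n : ℤ) + 1 := by
    refine (height_lt_iff _).2 fun j hj => Int.lt_add_one_iff.2 ?_
    rw [psum_reflectSteps w hj]
    exact levyTransform_le (psum_zero w) (abs_psum_succ_sub_le_one w) hj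
  rw [signChanges_eq_signChangesFrom]
  lia

lemma two_mul_signChanges_le (w : Fin n → Fin 3) :
    2 * signChanges w ≤ height (reflectSteps w) + 1 := by
  have hcompare := signChangesFrom_zero_le_one (psum w) n
  have hheight : 2 * (signChangesFrom 1 (psum w) n : ℤ) - 1 ≤ height (reflectSteps w) := by
    obtain ⟨j, hj, hle⟩ := exists_le_levyTransform (psum_zero w) (abs_psum_succ_sub_le_one w) n
    exact (le_height_iff _).2 ⟨j, hj, by rwa [psum_reflectSteps w hj]⟩
  rw [signChanges_eq_signChangesFrom]
  lia

end Walks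

section WalkMass

variable {pm p0 p1 : ℝ} {n : ℕ}

/-- The total weight of the walks of length `n` which satisfy `A`, i.e. the unnormalised probability
of `A`. -/
noncomputable def walkMass (pm p0 p1 : ℝ) (A : (Fin n → Fin 3) → Prop) : ℝ :=
  ∑ w with A w, walkWeight pm p0 p1 w

lemma stepWeight_nonneg (hm : 0 ≤ pm) (h0 : 0 ≤ p0) (h1 : 0 ≤ p1) (s : Fin 3) :
    0 ≤ stepWeight pm p0 p1 s := by
  unfold stepWeight
  split_ifs <;> assumption

lemma walkWeight_nonneg (hm : 0 ≤ pm) (h0 : 0 ≤ p0) (h1 : 0 ≤ p1) (w : Fin n → Fin 3) :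
    0 ≤ walkWeight pm p0 p1 w :=
  prod_nonneg fun i _ => stepWeight_nonneg hm h0 h1 (w i)

lemma walkMass_mono (hm : 0 ≤ pm) (h0 : 0 ≤ p0) (h1 : 0 ≤ p1) {A B : (Fin n → Fin 3) → Prop}
    (h : ∀ w, A w → B w) : walkMass pm p0 p1 A ≤ walkMass pm p0 p1 B :=
  sum_le_sum_of_subset_of_nonneg (monotone_filter_right _ fun w _ => h w)
    fun w _ _ => walkWeight_nonneg hm h0 h1 w

lemma sum_stepWeight (pm p0 p1 : ℝ) : ∑ s, stepWeight pm p0 p1 s = pm + p0 + p1 := by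
  simp [Fin.sum_univ_three, stepWeight]

lemma sum_walkWeight (pm p0 p1 : ℝ) (n : ℕ) :
    ∑ w : Fin n → Fin 3, walkWeight pm p0 p1 w = (pm + p0 + p1) ^ n := by
  simp only [walkWeight]
  rw [← Fintype.piFinset_univ, sum_prod_piFinset]
  simp [sum_stepWeight]

lemma walkMass_of_forall (pm p0 p1 : ℝ) {A : (Fin n → Fin 3) → Prop} (h : ∀ w, A w) :
    walkMass pm p0 p1 A = (pm + p0 + p1) ^ n := by
  rw [walkMass, filter_true_of_mem fun w _ => h w, sum_walkWeight]

lemma walkMass_add_walkMass_not (pm p0 p1 : ℝ) (A : (Fin n → Fin 3) → Prop) :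
    walkMass pm p0 p1 A + walkMass pm p0 p1 (fun w => ¬ A w) = (pm + p0 + p1) ^ n := by
  rw [← sum_walkWeight, walkMass, walkMass, sum_filter_add_sum_filter_not]

lemma walkMass_cons (pm p0 p1 : ℝ) (A : (Fin (n + 1) → Fin 3) → Prop) :
    walkMass pm p0 p1 A =
      ∑ s, stepWeight pm p0 p1 s * walkMass pm p0 p1 fun w => A (Fin.cons s w) := by
  simp only [walkMass, sum_filter, mul_sum]
  rw [← (Fin.consEquiv fun _ => Fin 3).sum_comp, Fintype.sum_prod_type]
  simp [walkWeight, Fin.prod_univ_succ, Fin.consEquiv]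

lemma walkMass_comp_of_injective {f : (Fin n → Fin 3) → Fin n → Fin 3}
    (hf : Function.Injective f) (hweight : ∀ w, walkWeight pm p0 p1 (f w) = walkWeight pm p0 p1 w)
    (A : (Fin n → Fin 3) → Prop) :
    walkMass pm p0 p1 (fun w => A (f w)) = walkMass pm p0 p1 A := by
  simp only [walkMass, sum_filter]
  exact Fintype.sum_bijective f (Finite.injective_iff_bijective.1 hf) _ _
    fun w => by simp only [hweight]

lemma sum_walkSignW (pm p0 p1 : ℝ) (n K : ℕ) :
    ∑ k ∈ range K, walkSignW pm p0 p1 n k =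
      walkMass pm p0 p1 fun w : Fin n → Fin 3 => signChanges w < K := by
  simp only [walkSignW, walkMass, sum_filter]
  rw [sum_comm]
  simp

end WalkMass

section Symmetric

variable {pm p0 : ℝ} {n : ℕ}

lemma stepWeight_rev (pm p0 : ℝ) (s : Fin 3) :
    stepWeight pm p0 pm s.rev = stepWeight pm p0 pm s := by
  fin_cases s <;> rfl

lemma walkWeight_reflectSteps (pm p0 : ℝ) (w : Fin n → Fin 3) :
    walkWeight pm p0 pm (reflectSteps w) = walkWeight pm p0 pm w :=
  prod_congr rfl fun i _ => by unfold reflectSteps; split_ifs <;> simp [stepWeight_rev]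

lemma walkMass_reflectSteps (pm p0 : ℝ) (A : (Fin n → Fin 3) → Prop) :
    walkMass pm p0 pm (fun w => A (reflectSteps w)) = walkMass pm p0 pm A :=
  walkMass_comp_of_injective reflectSteps_injective (walkWeight_reflectSteps pm p0) A

lemma walkMass_psum_neg (pm p0 : ℝ) (n : ℕ) (A : ℤ → Prop) :
    walkMass pm p0 pm (fun w : Fin n → Fin 3 => A (-psum w n)) =
      walkMass pm p0 pm fun w : Fin n → Fin 3 => A (psum w n) := by
  rw [← walkMass_comp_of_injective (f := fun w i => (w i).rev)
    (fun _ _ h => funext fun i => Fin.rev_injective (congrFun h i))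
    (fun w => prod_congr rfl fun i _ => stepWeight_rev pm p0 (w i))]
  simp [psum, stepVal_rev]

lemma walkMass_nonneg_add_walkMass_pos (pm p0 : ℝ) (n : ℕ) :
    walkMass pm p0 pm (fun w : Fin n → Fin 3 => 0 ≤ psum w n) +
      walkMass pm p0 pm (fun w : Fin n → Fin 3 => 1 ≤ psum w n) = (pm + p0 + pm) ^ n := by
  rw [← walkMass_psum_neg pm p0 n fun z => 1 ≤ z, ← walkMass_add_walkMass_not]
  congr! 3 with w
  lia

lemma walkMass_le_height (pm p0 : ℝ) (n : ℕ) {h : ℤ} (hh : 0 ≤ h) :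
    walkMass pm p0 pm (fun w : Fin n → Fin 3 => h ≤ height w) =
      walkMass pm p0 pm (fun w : Fin n → Fin 3 => h ≤ psum w n) +
        walkMass pm p0 pm (fun w : Fin n → Fin 3 => h + 1 ≤ psum w n) := by
  induction n generalizing h with
  | zero => simp [walkMass, height, psum, walkWeight]; lia
  | succ n ih =>
    rcases hh.eq_or_lt with rfl | hpos
    · rw [zero_add, walkMass_nonneg_add_walkMass_pos,
        walkMass_of_forall _ _ _ fun w => by positivity]
    · simp only [walkMass_cons _ _ _ (n := n), le_height_cons_iff _ _ hpos, psum_cons_succ]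
      rw [← sum_add_distrib]
      refine sum_congr rfl fun s _ => ?_
      have hs := abs_le.1 (abs_stepVal_le_one s)
      rw [ih (by lia), mul_add]
      simp only [sub_le_iff_le_add', sub_add_eq_add_sub]

lemma walkMass_height_lt (pm p0 : ℝ) (n : ℕ) {h : ℤ} (hh : 0 ≤ h) :
    walkMass pm p0 pm (fun w : Fin n → Fin 3 => height w < h) =
      (pm + p0 + pm) ^ n - (walkMass pm p0 pm (fun w : Fin n → Fin 3 => h ≤ psum w n) +
        walkMass pm p0 pm (fun w : Fin n → Fin 3 => h + 1 ≤ psum w n)) := by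
  rw [← walkMass_le_height pm p0 n hh, ← walkMass_add_walkMass_not pm p0 pm fun w => h ≤ height w]
  simp

lemma walkMass_height_lt_le_walkMass_signChanges_lt (hm : 0 ≤ pm) (h0 : 0 ≤ p0) (n K : ℕ) :
    walkMass pm p0 pm (fun w : Fin n → Fin 3 => height w < (2 * K + 1 : ℤ)) ≤
      walkMass pm p0 pm fun w : Fin n → Fin 3 => signChanges w < K + 1 := by
  rw [← walkMass_reflectSteps]
  exact walkMass_mono hm h0 hm fun w hw => by have := two_mul_signChanges_le w; lia

lemma walkMass_signChanges_lt_le_walkMass_height_lt (hm : 0 ≤ pm) (h0 : 0 ≤ p0) (n K : ℕ) :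
    walkMass pm p0 pm (fun w : Fin n → Fin 3 => signChanges w < K + 1) ≤
      walkMass pm p0 pm fun w : Fin n → Fin 3 => height w < (2 * K + 3 : ℤ) := by
  rw [← walkMass_reflectSteps _ _ fun w => height w < (2 * K + 3 : ℤ)]
  exact walkMass_mono hm h0 hm fun w hw => by have := height_reflectSteps_le w; lia

end Symmetric

section HalfNormal

/-- The density on `[0, ∞)` of the half-normal law `H(σ)`. -/
noncomputable def halfNormalPDF (σ t : ℝ) : ℝ :=
  √(2 / (Real.pi * σ ^ 2)) * Real.exp (-t ^ 2 / (2 * σ ^ 2))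

lemma halfNormalPDF_sqrt (v : NNReal) (t : ℝ) :
    halfNormalPDF √v t = 2 * gaussianPDFReal 0 v t := by
  have hconst : √(2 / (Real.pi * v)) = 2 * (√(2 * Real.pi * v))⁻¹ := by
    rw [← Real.sqrt_inv, ← Real.sqrt_sq (zero_le_two (α := ℝ)), ← Real.sqrt_mul (by positivity)]
    congr 1
    ring_nf
  rw [halfNormalPDF, gaussianPDFReal_def, Real.sq_sqrt v.coe_nonneg, hconst]
  simp only [sub_zero, mul_assoc]

lemma integral_halfNormalPDF_mul {c : ℝ} (hc : 0 < c) (σ x : ℝ) :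
    ∫ t in (0 : ℝ)..c * x, halfNormalPDF (c * σ) t = ∫ t in (0 : ℝ)..x, halfNormalPDF σ t := by
  have hscale (t : ℝ) : halfNormalPDF σ t = c * halfNormalPDF (c * σ) (c * t) := by
    have hconst : √(2 / (Real.pi * σ ^ 2)) = c * √(2 / (Real.pi * (c * σ) ^ 2)) := by
      rw [← Real.sqrt_sq hc.le, ← Real.sqrt_mul (by positivity), Real.sqrt_sq hc.le]
      congr 1
      field_simp
    have hexp : -(c * t) ^ 2 / (2 * (c * σ) ^ 2) = -t ^ 2 / (2 * σ ^ 2) := by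
      field_simp
    rw [halfNormalPDF, halfNormalPDF, hexp, hconst, mul_assoc]
  simp only [hscale, intervalIntegral.integral_const_mul]
  rw [intervalIntegral.mul_integral_comp_mul_left, mul_zero]

lemma one_sub_two_mul_gaussianReal_Ici {v : NNReal} (hv : v ≠ 0) (y : ℝ) :
    1 - 2 * (gaussianReal 0 v).real (Set.Ici y) = ∫ t in (0 : ℝ)..y, halfNormalPDF √v t := by
  have hint := integrable_gaussianPDFReal 0 v
  have htail : (gaussianReal 0 v).real (Set.Ici y) = ∫ t in Set.Ioi y, gaussianPDFReal 0 v t := by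
    rw [Measure.real, gaussianReal_apply_eq_integral 0 hv, integral_Ici_eq_integral_Ioi,
      ENNReal.toReal_ofReal]
    exact integral_nonneg fun t => gaussianPDFReal_nonneg 0 v t
  have hsymm : ∫ t in Set.Iic 0, gaussianPDFReal 0 v t =
      ∫ t in Set.Ioi 0, gaussianPDFReal 0 v t := by
    have := integral_comp_neg_Ioi 0 (gaussianPDFReal 0 v)
    rw [neg_zero] at this
    rw [← this]
    simp [gaussianPDFReal_def]
  have hhalf := intervalIntegral.integral_Iic_add_Ioi (b := 0) hint.integrableOn hint.integrableOn
  rw [integral_gaussianPDFReal_eq_one 0 hv, hsymm] at hhalf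
  have hsub := intervalIntegral.integral_Ioi_sub_Ioi' (a := 0) (b := y) hint.integrableOn
    hint.integrableOn
  simp only [halfNormalPDF_sqrt, intervalIntegral.integral_const_mul]
  rw [← hsub, htail]
  linarith

end HalfNormal

section CentralLimit

variable {Ω Ω' : Type*} {mΩ : MeasurableSpace Ω} {mΩ' : MeasurableSpace Ω'}
  {P : Measure Ω} [IsProbabilityMeasure P] {P' : Measure Ω'} [IsProbabilityMeasure P']

lemma tendsto_measureReal_le_of_tendstoInDistribution {Z : ℕ → Ω → ℝ} {Y : Ω' → ℝ} {y : ℕ → ℝ}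
    {y₀ : ℝ} (hZ : TendstoInDistribution Z atTop Y (fun _ => P) P')
    (hy : Tendsto y atTop (𝓝 y₀)) (hatom : P' {ω | Y ω = y₀} = 0) :
    Tendsto (fun n => P.real {ω | y n ≤ Z n ω}) atTop (𝓝 (P'.real {ω | y₀ ≤ Y ω})) := by
  have hshift := hZ.add_of_tendstoInMeasure_const (Y := fun n _ => -y n) (c := -y₀)
    (tendstoInMeasure_of_tendsto_ae (fun _ => by fun_prop) (ae_of_all _ fun _ => hy.neg))
    (fun _ => by fun_prop)
  have hlim := ProbabilityMeasure.tendsto_measure_of_null_frontier_of_tendsto' hshift.tendsto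
    (E := Set.Ici 0) (by
      rw [frontier_Ici, ProbabilityMeasure.coe_mk,
        Measure.map_apply_of_aemeasurable hshift.aemeasurable_limit (measurableSet_singleton _)]
      simpa [Set.preimage, ← sub_eq_add_neg, sub_eq_zero] using hatom)
  simp only [ProbabilityMeasure.coe_mk,
    Measure.map_apply_of_aemeasurable (hshift.forall_aemeasurable _) measurableSet_Ici,
    Measure.map_apply_of_aemeasurable hshift.aemeasurable_limit measurableSet_Ici] at hlim
  have hreal := (ENNReal.tendsto_toReal (measure_ne_top _ _)).comp hlim
  simpa [Function.comp_def, Measure.real, Set.preimage, ← sub_eq_add_neg] using hreal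

lemma tendsto_measureReal_le_sum {X : ℕ → Ω → ℝ} (hX : MemLp (X 0) 2 P) (hindep : iIndepFun X P)
    (hident : ∀ i, IdentDistrib (X i) (X 0) P P) (hmean : P[X 0] = 0) (hvar : Var[X 0; P] ≠ 0)
    {h : ℕ → ℝ} {y : ℝ} (hh : Tendsto (fun n : ℕ => h n / √n) atTop (𝓝 y)) :
    Tendsto (fun n => P.real {ω | h n ≤ ∑ k ∈ range n, X k ω}) atTop
      (𝓝 ((gaussianReal 0 Var[X 0; P].toNNReal).real (Set.Ici y))) := by
  have hv : Var[X 0; P].toNNReal ≠ 0 := by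
    simpa using (variance_nonneg _ _).lt_of_ne' hvar
  have := nullSingletonClass_gaussianReal (μ := 0) hv
  have hclt := tendstoInDistribution_inv_sqrt_mul_sum_sub .id hX hindep hident
  refine (tendsto_measureReal_le_of_tendstoInDistribution hclt hh (measure_singleton y)).congr' ?_
  filter_upwards [eventually_gt_atTop 0] with n hn
  have hsqrt : 0 < √(n : ℝ) := by positivity
  simp only [hmean, mul_zero, sub_zero, ← div_eq_inv_mul, div_le_div_iff_of_pos_right hsqrt]

lemma tendsto_sqrt_natCast_atTop : Tendsto (fun n : ℕ => √(n : ℝ)) atTop atTop :=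
  Real.tendsto_sqrt_atTop.comp tendsto_natCast_atTop_atTop

lemma tendsto_div_sqrt_of_abs_sub_le {a b : ℕ → ℝ} {y C : ℝ}
    (ha : Tendsto (fun n : ℕ => a n / √n) atTop (𝓝 y)) (hab : ∀ n, |b n - a n| ≤ C) :
    Tendsto (fun n : ℕ => b n / √n) atTop (𝓝 y) := by
  have hdiff : Tendsto (fun n : ℕ => (b n - a n) / √n) atTop (𝓝 0) := by
    refine squeeze_zero_norm (fun n => ?_)
      ((tendsto_const_nhds (x := C)).div_atTop tendsto_sqrt_natCast_atTop)
    rw [norm_div, Real.norm_eq_abs, Real.norm_of_nonneg (Real.sqrt_nonneg _)]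
    exact div_le_div_of_nonneg_right (hab n) (Real.sqrt_nonneg _)
  simpa [← add_div] using ha.add hdiff

end CentralLimit

section WalkLimit

/-- The law of a single step: `s` has probability proportional to its weight. -/
noncomputable def stepMeasure (pm p0 p1 : ℝ) : Measure (Fin 3) :=
  ∑ s, ENNReal.ofReal (stepWeight pm p0 p1 s / (pm + p0 + p1)) • Measure.dirac s

variable {pm p0 p1 : ℝ}

lemma stepMeasure_real_singleton (hm : 0 ≤ pm) (h0 : 0 ≤ p0) (h1 : 0 ≤ p1) (s : Fin 3) :
    (stepMeasure pm p0 p1).real {s} = stepWeight pm p0 p1 s / (pm + p0 + p1) := by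
  have hs := div_nonneg (stepWeight_nonneg hm h0 h1 s) (by positivity : 0 ≤ pm + p0 + p1)
  simp [stepMeasure, Measure.real, Set.indicator_apply, hs]

lemma isProbabilityMeasure_stepMeasure (hm : 0 < pm) (h0 : 0 ≤ p0) (h1 : 0 ≤ p1) :
    IsProbabilityMeasure (stepMeasure pm p0 p1) := by
  have hP : pm + p0 + p1 ≠ 0 := by positivity
  have hnonneg (s : Fin 3) : 0 ≤ stepWeight pm p0 p1 s / (pm + p0 + p1) :=
    div_nonneg (stepWeight_nonneg hm.le h0 h1 s) (by positivity)
  have hsum : ∑ s, stepWeight pm p0 p1 s / (pm + p0 + p1) = 1 := by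
    rw [← sum_div, sum_stepWeight, div_self hP]
  constructor
  simp [stepMeasure, ← ENNReal.ofReal_sum_of_nonneg fun s _ => hnonneg s, hsum]

lemma integral_stepMeasure (hm : 0 < pm) (h0 : 0 ≤ p0) (h1 : 0 ≤ p1) (f : Fin 3 → ℝ) :
    ∫ s, f s ∂stepMeasure pm p0 p1 = (pm * f 0 + p0 * f 1 + p1 * f 2) / (pm + p0 + p1) := by
  have := isProbabilityMeasure_stepMeasure hm h0 h1
  rw [integral_fintype .of_finite]
  simp only [stepMeasure_real_singleton hm.le h0 h1, smul_eq_mul, div_mul_eq_mul_div, ← sum_div]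
  simp [Fin.sum_univ_three, stepWeight]

lemma measureReal_infinitePi_stepMeasure (hm : 0 ≤ pm) (h0 : 0 ≤ p0) (h1 : 0 ≤ p1)
    [IsProbabilityMeasure (stepMeasure pm p0 p1)] {n : ℕ}
    (A : (Fin n → Fin 3) → Prop) :
    (Measure.infinitePi fun _ : ℕ => stepMeasure pm p0 p1).real {ω | A fun i : Fin n => ω i} =
      walkMass pm p0 p1 A / (pm + p0 + p1) ^ n := by
  have hmap : (Measure.infinitePi fun _ : ℕ => stepMeasure pm p0 p1).map
      (fun ω (i : Fin n) => ω i) = Measure.pi fun _ => stepMeasure pm p0 p1 := by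
    rw [Measure.map_infinitePi_infinitePi_of_inj Fin.val_injective, Measure.infinitePi_eq_pi]
  have hsingleton (w : Fin n → Fin 3) : (Measure.pi fun _ => stepMeasure pm p0 p1).real {w} =
      walkWeight pm p0 p1 w / (pm + p0 + p1) ^ n := by
    rw [Measure.real, Measure.pi_singleton, ENNReal.toReal_prod]
    simp only [← measureReal_def, stepMeasure_real_singleton hm h0 h1, walkWeight,
      prod_div_distrib, prod_const, card_univ, Fintype.card_fin]
  have hfilter : {w | A w} = (({w | A w} : Finset (Fin n → Fin 3)) : Set (Fin n → Fin 3)) := by simp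
  calc _ = (Measure.pi fun _ : Fin n => stepMeasure pm p0 p1).real {w | A w} := by
        rw [← hmap, map_measureReal_apply (by fun_prop) (Set.toFinite _).measurableSet]
        rfl
    _ = _ := by
        rw [hfilter, ← sum_measureReal_singleton]
        simp only [hsingleton, walkMass, sum_div]

lemma walkMass_le_psum_div_pow [IsProbabilityMeasure (stepMeasure pm p0 p1)] (hm : 0 ≤ pm)
    (h0 : 0 ≤ p0) (h1 : 0 ≤ p1) (n : ℕ) (h : ℤ) :
    walkMass pm p0 p1 (fun w : Fin n → Fin 3 => h ≤ psum w n) / (pm + p0 + p1) ^ n =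
      (Measure.infinitePi fun _ : ℕ => stepMeasure pm p0 p1).real
        {ω | (h : ℝ) ≤ ∑ k ∈ range n, (stepVal (ω k) : ℝ)} := by
  rw [← measureReal_infinitePi_stepMeasure hm h0 h1]
  simp only [psum_of_le _ le_rfl, Finset.sum_range, ← Int.cast_sum, Int.cast_le]

lemma tendsto_walkMass_le_psum (hm : 0 < pm) (h0 : 0 ≤ p0) {h : ℕ → ℤ} {y : ℝ}
    (hh : Tendsto (fun n : ℕ => (h n : ℝ) / √n) atTop (𝓝 y)) :
    Tendsto (fun n => walkMass pm p0 pm (fun w : Fin n → Fin 3 => h n ≤ psum w n) /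
        (pm + p0 + pm) ^ n) atTop
      (𝓝 ((gaussianReal 0 (2 * pm / (pm + p0 + pm)).toNNReal).real (Set.Ici y))) := by
  have := isProbabilityMeasure_stepMeasure hm h0 hm.le
  let P : Measure (ℕ → Fin 3) := Measure.infinitePi fun _ => stepMeasure pm p0 pm
  let X : ℕ → (ℕ → Fin 3) → ℝ := fun i ω => stepVal (ω i)
  have hcoord (i : ℕ) : AEMeasurable (fun ω : ℕ → Fin 3 => ω i) P :=
    (measurable_pi_apply i).aemeasurable
  have hX (i : ℕ) : Measurable (X i) := by fun_prop
  have hlaw (i : ℕ) : P.map (fun ω => ω i) = stepMeasure pm p0 pm := Measure.infinitePi_map_eval _ i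
  have hident (i : ℕ) : IdentDistrib (X i) (X 0) P P :=
    (⟨hcoord i, hcoord 0, by rw [hlaw, hlaw]⟩ :
      IdentDistrib (fun ω : ℕ → Fin 3 => ω i) (fun ω => ω 0) P P).comp
      (u := fun s => (stepVal s : ℝ)) .of_discrete
  have hindep : iIndepFun X P :=
    iIndepFun_infinitePi (X := fun _ s => (stepVal s : ℝ)) fun _ => .of_discrete
  have hintegral (f : Fin 3 → ℝ) :
      ∫ ω, f (ω 0) ∂P = (pm * f 0 + p0 * f 1 + pm * f 2) / (pm + p0 + pm) := by
    rw [← integral_stepMeasure hm h0 hm.le, ← hlaw 0, integral_map (hcoord 0) (by fun_prop)]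
  have hmean : P[X 0] = 0 := by
    rw [hintegral fun s => stepVal s]
    simp [stepVal]
  have hvar : Var[X 0; P] = 2 * pm / (pm + p0 + pm) := by
    rw [variance_of_integral_eq_zero (hX 0).aemeasurable hmean, hintegral fun s => stepVal s ^ 2]
    simp [stepVal, two_mul]
  have hmem : MemLp (X 0) 2 P := by
    refine .of_bound (hX 0).aestronglyMeasurable 1 (.of_forall fun ω => ?_)
    change |(stepVal (ω 0) : ℝ)| ≤ 1
    exact_mod_cast abs_stepVal_le_one (ω 0)
  simp only [walkMass_le_psum_div_pow hm.le h0 hm.le, ← hvar]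
  exact tendsto_measureReal_le_sum hmem hindep hident hmean (by rw [hvar]; positivity) hh

lemma tendsto_walkMass_height_lt (hm : 0 < pm) (h0 : 0 ≤ p0) {h : ℕ → ℤ} (hnonneg : ∀ n, 0 ≤ h n)
    {y : ℝ} (hh : Tendsto (fun n : ℕ => (h n : ℝ) / √n) atTop (𝓝 y)) :
    Tendsto (fun n => walkMass pm p0 pm (fun w : Fin n → Fin 3 => height w < h n) /
        (pm + p0 + pm) ^ n) atTop
      (𝓝 (∫ t in (0 : ℝ)..y, halfNormalPDF √(2 * pm / (pm + p0 + pm)) t)) := by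
  have hP : pm + p0 + pm ≠ 0 := by positivity
  have hv : (2 * pm / (pm + p0 + pm)).toNNReal ≠ 0 := by
    simpa using (by positivity : 0 < 2 * pm / (pm + p0 + pm))
  have hh_succ : Tendsto (fun n : ℕ => ((h n + 1 : ℤ) : ℝ) / √n) atTop (𝓝 y) :=
    tendsto_div_sqrt_of_abs_sub_le hh (C := 1) fun n => by simp
  have hlim := ((tendsto_walkMass_le_psum hm h0 hh).add
    (tendsto_walkMass_le_psum hm h0 hh_succ)).const_sub 1
  rw [← two_mul, one_sub_two_mul_gaussianReal_Ici hv, Real.coe_toNNReal _ (by positivity)] at hlim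
  simpa only [walkMass_height_lt _ _ _ (hnonneg _), sub_div, add_div,
    div_self (pow_ne_zero _ hP)] using hlim

end WalkLimit

theorem walks_sign_changes_half_normal_general (pm p0 p1 : ℝ) (hpm : 0 < pm) (hp0 : 0 ≤ p0)
    (hdrift : p1 = pm) {x : ℝ} {K : ℕ → ℕ}
    (hK : Tendsto (fun n : ℕ => (K n : ℝ) / √n) atTop (𝓝 x)) :
    Tendsto (fun n => (∑ k ∈ range (K n + 1), walkSignW pm p0 p1 n k) / (pm + p0 + p1) ^ n) atTop
      (𝓝 (∫ t in (0 : ℝ)..x, halfNormalPDF (1 / 2 * √(2 * pm / (pm + p0 + p1))) t)) := by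
  subst hdrift
  have hheight (c : ℕ) : Tendsto (fun n => walkMass p1 p0 p1
      (fun w : Fin n → Fin 3 => height w < (2 * K n + c : ℤ)) / (p1 + p0 + p1) ^ n) atTop
      (𝓝 (∫ t in (0 : ℝ)..x, halfNormalPDF (1 / 2 * √(2 * p1 / (p1 + p0 + p1))) t)) := by
    rw [← integral_halfNormalPDF_mul two_pos, ← mul_assoc, mul_one_div_cancel two_ne_zero, one_mul]
    refine tendsto_walkMass_height_lt hpm hp0 (fun n => by positivity)
      (tendsto_div_sqrt_of_abs_sub_le (a := fun n => 2 * K n) (C := c) ?_ fun n => by simp)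
    simpa only [mul_div_assoc] using hK.const_mul 2
  simp only [sum_walkSignW]
  refine tendsto_of_tendsto_of_tendsto_of_le_of_le (hheight 1) (hheight 3) (fun n => ?_) fun n => ?_
  · exact div_le_div_of_nonneg_right
      (walkMass_height_lt_le_walkMass_signChanges_lt hpm.le hp0 n (K n)) (by positivity)
  · exact div_le_div_of_nonneg_right
      (walkMass_signChanges_lt_le_walkMass_height_lt hpm.le hp0 n (K n)) (by positivity)

/-- **Limit law for sign changes of walks, zero drift**: `X_n/√n` converges in
distribution to the half-normal law `H(σ)` with `σ = (1/2)√(P″(1)/P(1))`. -/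
theorem walks_sign_changes_half_normal (pm p0 p1 : ℝ)
    (hpm : 0 < pm) (hp0 : 0 < p0) (hp1 : 0 < p1) (hdrift : p1 = pm) :
    let P1 : ℝ := pm + p0 + p1
    let σ : ℝ := (1 / 2) * Real.sqrt (2 * pm / P1)
    ∀ x : ℝ, 0 ≤ x →
      Filter.Tendsto
        (fun n : ℕ =>
          (∑ k ∈ Finset.range (⌊x * Real.sqrt n⌋₊ + 1), walkSignW pm p0 p1 n k) / P1 ^ n)
        Filter.atTop
        (nhds (∫ t in (0:ℝ)..x,
          Real.sqrt (2 / (Real.pi * σ ^ 2)) * Real.exp (-t ^ 2 / (2 * σ ^ 2)))) := by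
  intro _ _ x hx
  exact walks_sign_changes_half_normal_general pm p0 p1 hpm hp0.le hdrift
    ((tendsto_nat_floor_mul_div_atTop hx).comp tendsto_sqrt_natCast_atTop)
end
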